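/- arXiv:2505.00790 — 2 statements merged into one kernel-verified Lean document; each statement's English description precedes it below -/
import Mathlib

section
/- Area integrals of the Goh variation builder (Lemma 3.5). For every pair 1 ≤ i < j ≤ m and all α^i, α^j, β^i, β^j > 0, with r := (α^i)^{-1} + (α^j)^{-1} + (β^i)^{-1} + (β^j)^{-1}: (a) ∫_0^1 Γ^i_{(i,j)}(t) γ^j_{(i,j)}(t) dt = 1/(2r²) (this integral is the signed area Area(Γ^i_{(i,j)}, Γ^j_{(i,j)}) of the closed plane curve (Γ^i_{(i,j)}, Γ^j_{(i,j)})), and consequently ∫_0^1 Γ^j_{(i,j)}(t) γ^i_{(i,j)}(t) dt = −1/(2r²); (b) for every h ∈ {0,…,m}\{i,j} (with γ^0_{(i,j)} := 0), ∫_0^1 Γ^i_{(i,j)}(t) γ^h_{(i,j)}(t) dt = 0 = ∫_0^1 Γ^j_{(i,j)}(t) γ^h_{(i,j)}(t) dt. -/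
open MeasureTheory Set Filter Topology

/-- The Goh variation builder `γ_{(i,j)}`. -/
noncomputable def gohBuilder {m : ℕ} (i j : Fin m) (αi αj βi βj : ℝ) : ℝ → Fin m → ℝ :=
  let r : ℝ := αi⁻¹ + αj⁻¹ + βi⁻¹ + βj⁻¹
  let τ1 : ℝ := αi⁻¹ / (2 * r)
  let τ2 : ℝ := τ1 + αj⁻¹ / (2 * r)
  let τ3 : ℝ := τ2 + βi⁻¹ / (2 * r)
  let γhat : ℝ → Fin m → ℝ := fun s =>
    if s ≤ τ1 then αi • (Pi.single i 1 : Fin m → ℝ)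
    else if s ≤ τ2 then αj • (Pi.single j 1 : Fin m → ℝ)
    else if s ≤ τ3 then (-βi) • (Pi.single i 1 : Fin m → ℝ)
    else (-βj) • (Pi.single j 1 : Fin m → ℝ)
  fun s => if s ≤ 1/2 then γhat s else -γhat (s - 1/2)

/-- Its primitive `Γ_{(i,j)}(s) = ∫₀ˢ γ_{(i,j)}`. -/
noncomputable def gohPrimitive {m : ℕ} (i j : Fin m) (αi αj βi βj : ℝ) (s : ℝ) : Fin m → ℝ :=
  ∫ σ in (0:ℝ)..s, gohBuilder i j αi αj βi βj σ

/-! The two entries `(i, j)` and `(j, i)` are second iterated integrals of the pair `(γⁱ, γʲ)`, and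
Chen's identity computes these piece by piece. On `[0, 1/2]` the curve `(Γⁱ, Γʲ)` runs
counterclockwise around the square `[0, e]²` with `e = 1 / (2r)`: each switching time is chosen so
that velocity times duration is `±e`. On `[1/2, 1]` the velocity changes sign, so the curve runs
counterclockwise around `[-e, 0]²`. The total area is therefore `2e² = 1 / (2r²)`. The `(j, i)`
entry is its opposite because integration by parts on a closed curve has no boundary term. -/

/-- The second iterated integral `∫ₐᵇ (∫ₐᵗ f) g(t) dt`. When `f` and `g` are the velocities of a
plane curve closed over `[a, b]`, this is the signed area that the curve encloses. -/
noncomputable def iteratedIntegral (f g : ℝ → ℝ) (a b : ℝ) : ℝ :=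
  ∫ t in a..b, (∫ s in a..t, f s) * g t

section IteratedIntegral

variable {f g f₁ g₁ : ℝ → ℝ} {a b c : ℝ}

theorem intervalIntegrable_primitive_mul (hf : IntervalIntegrable f volume a b)
    (hg : IntervalIntegrable g volume a b) :
    IntervalIntegrable (fun t => (∫ s in a..t, f s) * g t) volume a b :=
  hg.continuousOn_mul (intervalIntegral.continuousOn_primitive_interval' hf left_mem_uIcc)

theorem iteratedIntegral_congr (hf : EqOn f f₁ (uIoo a b)) (hg : EqOn g g₁ (uIoo a b)) :
    iteratedIntegral f g a b = iteratedIntegral f₁ g₁ a b := by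
  refine intervalIntegral.integral_congr_uIoo fun t ht => ?_
  have hsub : uIoo a t ⊆ uIoo a b :=
    Ioo_subset_Ioo (le_inf inf_le_left ht.1.le) (sup_le le_sup_left ht.2.le)
  simp only [intervalIntegral.integral_congr_uIoo (hf.mono hsub), hg ht]

theorem iteratedIntegral_eq_zero_of_fst (hf : EqOn f 0 (uIoo a b)) :
    iteratedIntegral f g a b = 0 := by
  rw [iteratedIntegral_congr hf (eqOn_refl g _)]
  simp [iteratedIntegral]

theorem iteratedIntegral_eq_zero_of_snd (hg : EqOn g 0 (uIoo a b)) :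
    iteratedIntegral f g a b = 0 := by
  rw [iteratedIntegral_congr (eqOn_refl f _) hg]
  simp [iteratedIntegral]

theorem iteratedIntegral_neg_neg : iteratedIntegral (-f) (-g) a b = iteratedIntegral f g a b := by
  simp [iteratedIntegral]

theorem iteratedIntegral_comp_add_right (c : ℝ) :
    iteratedIntegral (fun s => f (s + c)) (fun s => g (s + c)) a b =
      iteratedIntegral f g (a + c) (b + c) := by
  simp only [iteratedIntegral, intervalIntegral.integral_comp_add_right]
  exact intervalIntegral.integral_comp_add_right (fun t => (∫ s in (a + c)..t, f s) * g t) c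

/-- Chen's identity for second iterated integrals. -/
theorem iteratedIntegral_add_adjacent
    (hf : IntervalIntegrable f volume a b) (hf' : IntervalIntegrable f volume b c)
    (hg : IntervalIntegrable g volume a b) (hg' : IntervalIntegrable g volume b c) :
    iteratedIntegral f g a c =
      iteratedIntegral f g a b + (∫ s in a..b, f s) * (∫ t in b..c, g t) +
        iteratedIntegral f g b c := by
  have hsplit : EqOn (fun t => (∫ s in a..t, f s) * g t)
      (fun t => (∫ s in a..b, f s) * g t + (∫ s in b..t, f s) * g t) (uIcc b c) := by
    intro t ht
    have hbt := hf'.mono_set (uIcc_subset_uIcc_left ht)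
    simp only [← intervalIntegral.integral_add_adjacent_intervals hf hbt, add_mul]
  have htail : ∫ t in b..c, (∫ s in a..t, f s) * g t =
      (∫ s in a..b, f s) * (∫ t in b..c, g t) + iteratedIntegral f g b c := by
    rw [intervalIntegral.integral_congr hsplit, intervalIntegral.integral_add (hg'.const_mul _)
      (intervalIntegrable_primitive_mul hf' hg'), intervalIntegral.integral_const_mul]
    rfl
  have htail_int : IntervalIntegrable (fun t => (∫ s in a..t, f s) * g t) volume b c :=
    ((hg'.const_mul _).add (intervalIntegrable_primitive_mul hf' hg')).congr
      (hsplit.symm.mono uIoc_subset_uIcc)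
  rw [add_assoc, ← htail]
  exact (intervalIntegral.integral_add_adjacent_intervals
    (intervalIntegrable_primitive_mul hf hg) htail_int).symm

theorem iteratedIntegral_add_swap (hf : IntervalIntegrable f volume a b)
    (hg : IntervalIntegrable g volume a b) :
    iteratedIntegral f g a b + iteratedIntegral g f a b =
      (∫ s in a..b, f s) * (∫ s in a..b, g s) := by
  have hF := hf.absolutelyContinuousOnInterval_intervalIntegral left_mem_uIcc
  have hG := hg.absolutelyContinuousOnInterval_intervalIntegral left_mem_uIcc
  have hparts := hF.integral_deriv_mul_eq_sub hG
  simp only [intervalIntegral.integral_same, mul_zero, sub_zero] at hparts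
  rw [← hparts, iteratedIntegral, iteratedIntegral, ← intervalIntegral.integral_add
    (intervalIntegrable_primitive_mul hf hg) (intervalIntegrable_primitive_mul hg hf)]
  refine intervalIntegral.integral_congr_ae ?_
  filter_upwards [hf.ae_hasDerivAt_integral, hg.ae_hasDerivAt_integral] with t hft hgt ht
  rw [(hft (uIoc_subset_uIcc ht) a left_mem_uIcc).deriv,
    (hgt (uIoc_subset_uIcc ht) a left_mem_uIcc).deriv]
  ring

end IteratedIntegral

section Antiperiodic

variable {E : Type*} [NormedAddCommGroup E] {F : ℝ → E} {f g : ℝ → ℝ} {a b T : ℝ}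

theorem intervalIntegrable_shift_of_eqOn_neg (hF : IntervalIntegrable F volume a b)
    (hFT : EqOn (fun s => F (s + T)) (-F) (uIoo a b)) :
    IntervalIntegrable F volume (a + T) (b + T) :=
  (IntervalIntegrable.comp_add_right_iff).mp (hF.neg.congr_uIoo hFT.symm)

theorem integral_shift_of_eqOn_neg [NormedSpace ℝ E]
    (hFT : EqOn (fun s => F (s + T)) (-F) (uIoo a b)) :
    ∫ s in (a + T)..(b + T), F s = -∫ s in a..b, F s := by
  rw [← intervalIntegral.integral_comp_add_right, intervalIntegral.integral_congr_uIoo hFT]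
  exact intervalIntegral.integral_neg

theorem iteratedIntegral_shift_of_eqOn_neg (hfT : EqOn (fun s => f (s + T)) (-f) (uIoo a b))
    (hgT : EqOn (fun s => g (s + T)) (-g) (uIoo a b)) :
    iteratedIntegral f g (a + T) (b + T) = iteratedIntegral f g a b := by
  rw [← iteratedIntegral_comp_add_right, iteratedIntegral_congr hfT hgT, iteratedIntegral_neg_neg]

theorem intervalIntegrable_of_shift_eqOn_neg (hF : IntervalIntegrable F volume a (a + T))
    (hFT : EqOn (fun s => F (s + T)) (-F) (uIoo a (a + T))) :
    IntervalIntegrable F volume a (a + T + T) :=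
  hF.trans (intervalIntegrable_shift_of_eqOn_neg hF hFT)

theorem integral_eq_zero_of_shift_eqOn_neg [NormedSpace ℝ E]
    (hF : IntervalIntegrable F volume a (a + T))
    (hFT : EqOn (fun s => F (s + T)) (-F) (uIoo a (a + T))) :
    ∫ s in a..(a + T + T), F s = 0 := by
  rw [← intervalIntegral.integral_add_adjacent_intervals hF
    (intervalIntegrable_shift_of_eqOn_neg hF hFT), integral_shift_of_eqOn_neg hFT, add_neg_cancel]

theorem iteratedIntegral_eq_two_mul_of_shift_eqOn_neg (hf : IntervalIntegrable f volume a (a + T))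
    (hg : IntervalIntegrable g volume a (a + T))
    (hfT : EqOn (fun s => f (s + T)) (-f) (uIoo a (a + T)))
    (hgT : EqOn (fun s => g (s + T)) (-g) (uIoo a (a + T)))
    (hclosed : ∫ s in a..(a + T), f s = 0) :
    iteratedIntegral f g a (a + T + T) = 2 * iteratedIntegral f g a (a + T) := by
  rw [iteratedIntegral_add_adjacent hf (intervalIntegrable_shift_of_eqOn_neg hf hfT) hg
    (intervalIntegrable_shift_of_eqOn_neg hg hgT), iteratedIntegral_shift_of_eqOn_neg hfT hgT,
    hclosed]
  ring

end Antiperiodic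

/-- The velocity `(f, g)` of a plane curve moving only horizontally on `[a, b]`, by `u` in total,
and then only vertically on `[b, c]`, by `v` in total. -/
structure IsCornerVelocity (f g : ℝ → ℝ) (a b c u v : ℝ) : Prop where
  intervalIntegrable_horizontal : IntervalIntegrable f volume a b
  snd_eq_zero : EqOn g 0 (uIoo a b)
  integral_horizontal : ∫ s in a..b, f s = u
  intervalIntegrable_vertical : IntervalIntegrable g volume b c
  fst_eq_zero : EqOn f 0 (uIoo b c)
  integral_vertical : ∫ s in b..c, g s = v

theorem intervalIntegrable_of_eqOn_const {E : Type*} [NormedAddCommGroup E] {f : ℝ → E}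
    {a b : ℝ} {p : E} (hf : EqOn f (fun _ => p) (uIoo a b)) : IntervalIntegrable f volume a b :=
  intervalIntegrable_const.congr_uIoo hf.symm

theorem integral_of_eqOn_const {E : Type*} [NormedAddCommGroup E] [NormedSpace ℝ E]
    [CompleteSpace E] {f : ℝ → E} {a b : ℝ} {p : E} (hf : EqOn f (fun _ => p) (uIoo a b)) :
    ∫ s in a..b, f s = (b - a) • p := by
  rw [intervalIntegral.integral_congr_uIoo hf, intervalIntegral.integral_const]

namespace IsCornerVelocity

variable {f g : ℝ → ℝ} {a b c d e p q u v : ℝ}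

theorem of_eqOn_single {ι : Type*} [DecidableEq ι] {γ : ℝ → ι → ℝ} {i j : ι} (hij : i ≠ j)
    (hi : EqOn γ (fun _ => p • Pi.single i 1) (uIoo a b))
    (hj : EqOn γ (fun _ => q • Pi.single j 1) (uIoo b c))
    (hu : (b - a) * p = u) (hv : (c - b) * q = v) :
    IsCornerVelocity (γ · i) (γ · j) a b c u v := by
  have hfst : EqOn (γ · i) (fun _ => p) (uIoo a b) := fun s hs => by simp [hi hs]
  have hsnd : EqOn (γ · j) (fun _ => q) (uIoo b c) := fun s hs => by simp [hj hs]
  exact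
    { intervalIntegrable_horizontal := intervalIntegrable_of_eqOn_const hfst
      snd_eq_zero := fun s hs => by simp [hi hs, hij.symm]
      integral_horizontal := (integral_of_eqOn_const hfst).trans hu
      intervalIntegrable_vertical := intervalIntegrable_of_eqOn_const hsnd
      fst_eq_zero := fun s hs => by simp [hj hs, hij]
      integral_vertical := (integral_of_eqOn_const hsnd).trans hv }

theorem intervalIntegrable_fst (h : IsCornerVelocity f g a b c u v) :
    IntervalIntegrable f volume a c :=
  h.intervalIntegrable_horizontal.trans (intervalIntegrable_of_eqOn_const h.fst_eq_zero)

theorem intervalIntegrable_snd (h : IsCornerVelocity f g a b c u v) :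
    IntervalIntegrable g volume a c :=
  (intervalIntegrable_of_eqOn_const h.snd_eq_zero).trans h.intervalIntegrable_vertical

theorem integral_fst (h : IsCornerVelocity f g a b c u v) : ∫ s in a..c, f s = u := by
  rw [← intervalIntegral.integral_add_adjacent_intervals h.intervalIntegrable_horizontal
    (intervalIntegrable_of_eqOn_const h.fst_eq_zero), h.integral_horizontal,
    integral_of_eqOn_const (p := 0) h.fst_eq_zero, smul_zero, add_zero]

theorem integral_snd (h : IsCornerVelocity f g a b c u v) : ∫ s in a..c, g s = v := by
  rw [← intervalIntegral.integral_add_adjacent_intervals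
    (intervalIntegrable_of_eqOn_const h.snd_eq_zero) h.intervalIntegrable_vertical,
    h.integral_vertical, integral_of_eqOn_const (p := 0) h.snd_eq_zero, smul_zero, zero_add]

theorem iteratedIntegral_eq (h : IsCornerVelocity f g a b c u v) :
    iteratedIntegral f g a c = u * v := by
  rw [iteratedIntegral_add_adjacent h.intervalIntegrable_horizontal
      (intervalIntegrable_of_eqOn_const h.fst_eq_zero)
      (intervalIntegrable_of_eqOn_const h.snd_eq_zero) h.intervalIntegrable_vertical,
    iteratedIntegral_eq_zero_of_snd h.snd_eq_zero, iteratedIntegral_eq_zero_of_fst h.fst_eq_zero,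
    h.integral_horizontal, h.integral_vertical, zero_add, add_zero]

theorem integral_fst_rectangle (h : IsCornerVelocity f g a b c u v)
    (h' : IsCornerVelocity f g c d e (-u) (-v)) : ∫ s in a..e, f s = 0 := by
  rw [← intervalIntegral.integral_add_adjacent_intervals h.intervalIntegrable_fst
    h'.intervalIntegrable_fst, h.integral_fst, h'.integral_fst, add_neg_cancel]

theorem iteratedIntegral_rectangle (h : IsCornerVelocity f g a b c u v)
    (h' : IsCornerVelocity f g c d e (-u) (-v)) : iteratedIntegral f g a e = u * v := by
  rw [iteratedIntegral_add_adjacent h.intervalIntegrable_fst h'.intervalIntegrable_fst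
    h.intervalIntegrable_snd h'.intervalIntegrable_snd, h.iteratedIntegral_eq,
    h'.iteratedIntegral_eq, h.integral_fst, h'.integral_snd]
  ring

end IsCornerVelocity

section GohTimes

/-- The paper's normalisation constant `r`. -/
noncomputable def gohRate (αi αj βi βj : ℝ) : ℝ := αi⁻¹ + αj⁻¹ + βi⁻¹ + βj⁻¹

/-- The switching time `τ₁` of the Goh variation builder. -/
noncomputable def gohTau₁ (αi αj βi βj : ℝ) : ℝ := αi⁻¹ / (2 * gohRate αi αj βi βj)

/-- The switching time `τ₂` of the Goh variation builder. -/
noncomputable def gohTau₂ (αi αj βi βj : ℝ) : ℝ :=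
  gohTau₁ αi αj βi βj + αj⁻¹ / (2 * gohRate αi αj βi βj)

/-- The switching time `τ₃` of the Goh variation builder. -/
noncomputable def gohTau₃ (αi αj βi βj : ℝ) : ℝ :=
  gohTau₂ αi αj βi βj + βi⁻¹ / (2 * gohRate αi αj βi βj)

/-- The side length `1 / (2r)` of the two squares traced by the curve `(Γⁱ, Γʲ)`. -/
noncomputable def gohSide (αi αj βi βj : ℝ) : ℝ := 1 / (2 * gohRate αi αj βi βj)

variable {αi αj βi βj : ℝ}

theorem gohRate_pos (hαi : 0 < αi) (hαj : 0 < αj) (hβi : 0 < βi) (hβj : 0 < βj) :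
    0 < gohRate αi αj βi βj := by
  unfold gohRate; positivity

theorem half_sub_gohTau₃ (hr : gohRate αi αj βi βj ≠ 0) :
    1 / 2 - gohTau₃ αi αj βi βj = βj⁻¹ / (2 * gohRate αi αj βi βj) := by
  have hsum : 1 / 2 =
      (αi⁻¹ + αj⁻¹ + βi⁻¹ + βj⁻¹) / (2 * gohRate αi αj βi βj) := by
    change 1 / 2 = gohRate αi αj βi βj / (2 * gohRate αi αj βi βj)
    field_simp
  rw [hsum, gohTau₃, gohTau₂, gohTau₁]
  ring

theorem gohTau₁_pos (hαi : 0 < αi) (hr : 0 < gohRate αi αj βi βj) :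
    0 < gohTau₁ αi αj βi βj := by
  unfold gohTau₁; positivity

theorem gohTau₁_lt_gohTau₂ (hαj : 0 < αj) (hr : 0 < gohRate αi αj βi βj) :
    gohTau₁ αi αj βi βj < gohTau₂ αi αj βi βj :=
  lt_add_of_pos_right _ (by positivity)

theorem gohTau₂_lt_gohTau₃ (hβi : 0 < βi) (hr : 0 < gohRate αi αj βi βj) :
    gohTau₂ αi αj βi βj < gohTau₃ αi αj βi βj :=
  lt_add_of_pos_right _ (by positivity)

theorem gohTau₃_lt_half (hβj : 0 < βj) (hr : 0 < gohRate αi αj βi βj) :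
    gohTau₃ αi αj βi βj < 1 / 2 := by
  rw [← sub_pos, half_sub_gohTau₃ hr.ne']
  positivity

end GohTimes

theorem intervalIntegral_apply {ι : Type*} [Fintype ι] {E : ι → Type*}
    [∀ p, NormedAddCommGroup (E p)] [∀ p, NormedSpace ℝ (E p)] [∀ p, CompleteSpace (E p)]
    {γ : ℝ → ∀ p, E p} {a b : ℝ} (hγ : ∀ p, IntervalIntegrable (γ · p) volume a b) (p : ι) :
    (∫ s in a..b, γ s) p = ∫ s in a..b, γ s p := by
  simp only [intervalIntegral, Pi.sub_apply, eval_integral fun q => (hγ q).1,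
    eval_integral fun q => (hγ q).2]

section GohBuilder

variable {m : ℕ} {i j : Fin m} {αi αj βi βj s : ℝ}

theorem gohBuilder_of_le_half (hs : s ≤ 1 / 2) :
    gohBuilder i j αi αj βi βj s =
      if s ≤ gohTau₁ αi αj βi βj then αi • Pi.single i 1
      else if s ≤ gohTau₂ αi αj βi βj then αj • Pi.single j 1
      else if s ≤ gohTau₃ αi αj βi βj then (-βi) • Pi.single i 1
      else (-βj) • Pi.single j 1 :=
  if_pos hs

theorem gohBuilder_add_half (hs₀ : 0 < s) (hs : s ≤ 1 / 2) :
    gohBuilder i j αi αj βi βj (s + 1 / 2) = -gohBuilder i j αi αj βi βj s := by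
  have hs' : ¬s + 1 / 2 ≤ 1 / 2 := by linarith
  simp only [gohBuilder, if_neg hs', if_pos hs, add_sub_cancel_right]

theorem eqOn_gohBuilder_apply_add_half (h : Fin m) :
    EqOn (fun s => gohBuilder i j αi αj βi βj (s + 1 / 2) h) (-(gohBuilder i j αi αj βi βj · h))
      (uIoo 0 (0 + 1 / 2)) := by
  rw [zero_add, uIoo_of_lt one_half_pos]
  exact fun s hs => congrFun (gohBuilder_add_half hs.1 hs.2.le) h

theorem gohBuilder_apply_of_ne {h : Fin m} (hi : h ≠ i) (hj : h ≠ j) (t : ℝ) :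
    gohBuilder i j αi αj βi βj t h = 0 := by
  simp only [gohBuilder]
  split_ifs <;> simp [hi, hj]

theorem isCornerVelocity_gohBuilder_first (hij : i ≠ j)
    (hαi : 0 < αi) (hαj : 0 < αj) (hβi : 0 < βi) (hβj : 0 < βj) :
    IsCornerVelocity (gohBuilder i j αi αj βi βj · i) (gohBuilder i j αi αj βi βj · j)
      0 (gohTau₁ αi αj βi βj) (gohTau₂ αi αj βi βj)
      (gohSide αi αj βi βj) (gohSide αi αj βi βj) := by
  have hr := gohRate_pos hαi hαj hβi hβj
  have h₁ := gohTau₁_pos hαi hr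
  have h₂ := gohTau₁_lt_gohTau₂ hαj hr
  have h₃ := gohTau₂_lt_gohTau₃ hβi hr
  have h₄ := gohTau₃_lt_half hβj hr
  have hγ₁ : EqOn (gohBuilder i j αi αj βi βj) (fun _ => αi • Pi.single i 1)
      (uIoo 0 (gohTau₁ αi αj βi βj)) := by
    rw [uIoo_of_lt h₁]
    rintro s ⟨-, hs⟩
    rw [gohBuilder_of_le_half (by linarith), if_pos hs.le]
  have hγ₂ : EqOn (gohBuilder i j αi αj βi βj) (fun _ => αj • Pi.single j 1)
      (uIoo (gohTau₁ αi αj βi βj) (gohTau₂ αi αj βi βj)) := by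
    rw [uIoo_of_lt h₂]
    rintro s ⟨hs, hs'⟩
    rw [gohBuilder_of_le_half (by linarith), if_neg hs.not_ge, if_pos hs'.le]
  have hu : (gohTau₁ αi αj βi βj - 0) * αi = gohSide αi αj βi βj := by
    rw [gohTau₁, gohSide, sub_zero]; field_simp
  have hv : (gohTau₂ αi αj βi βj - gohTau₁ αi αj βi βj) * αj = gohSide αi αj βi βj := by
    rw [gohTau₂, add_sub_cancel_left, gohSide]; field_simp
  exact .of_eqOn_single hij hγ₁ hγ₂ hu hv

theorem isCornerVelocity_gohBuilder_second (hij : i ≠ j)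
    (hαi : 0 < αi) (hαj : 0 < αj) (hβi : 0 < βi) (hβj : 0 < βj) :
    IsCornerVelocity (gohBuilder i j αi αj βi βj · i) (gohBuilder i j αi αj βi βj · j)
      (gohTau₂ αi αj βi βj) (gohTau₃ αi αj βi βj) (1 / 2)
      (-gohSide αi αj βi βj) (-gohSide αi αj βi βj) := by
  have hr := gohRate_pos hαi hαj hβi hβj
  have h₂ := gohTau₁_lt_gohTau₂ hαj hr
  have h₃ := gohTau₂_lt_gohTau₃ hβi hr
  have h₄ := gohTau₃_lt_half hβj hr
  have hγ₃ : EqOn (gohBuilder i j αi αj βi βj) (fun _ => (-βi) • Pi.single i 1)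
      (uIoo (gohTau₂ αi αj βi βj) (gohTau₃ αi αj βi βj)) := by
    rw [uIoo_of_lt h₃]
    rintro s ⟨hs, hs'⟩
    rw [gohBuilder_of_le_half (by linarith), if_neg (by linarith), if_neg hs.not_ge,
      if_pos hs'.le]
  have hγ₄ : EqOn (gohBuilder i j αi αj βi βj) (fun _ => (-βj) • Pi.single j 1)
      (uIoo (gohTau₃ αi αj βi βj) (1 / 2)) := by
    rw [uIoo_of_lt h₄]
    rintro s ⟨hs, hs'⟩
    rw [gohBuilder_of_le_half hs'.le, if_neg (by linarith), if_neg (by linarith),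
      if_neg hs.not_ge]
  have hu : (gohTau₃ αi αj βi βj - gohTau₂ αi αj βi βj) * -βi = -gohSide αi αj βi βj := by
    rw [gohTau₃, add_sub_cancel_left, gohSide]; field_simp
  have hv : (1 / 2 - gohTau₃ αi αj βi βj) * -βj = -gohSide αi αj βi βj := by
    rw [half_sub_gohTau₃ hr.ne', gohSide]; field_simp
  exact .of_eqOn_single hij hγ₃ hγ₄ hu hv

theorem intervalIntegrable_gohBuilder_apply_half (hij : i ≠ j)
    (hαi : 0 < αi) (hαj : 0 < αj) (hβi : 0 < βi) (hβj : 0 < βj) (h : Fin m) :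
    IntervalIntegrable (gohBuilder i j αi αj βi βj · h) volume 0 (0 + 1 / 2) := by
  have hfirst := isCornerVelocity_gohBuilder_first hij hαi hαj hβi hβj
  have hsecond := isCornerVelocity_gohBuilder_second hij hαi hαj hβi hβj
  rw [zero_add]
  rcases eq_or_ne h i with rfl | hi
  · exact hfirst.intervalIntegrable_fst.trans hsecond.intervalIntegrable_fst
  rcases eq_or_ne h j with rfl | hj
  · exact hfirst.intervalIntegrable_snd.trans hsecond.intervalIntegrable_snd
  · simp only [gohBuilder_apply_of_ne hi hj, intervalIntegrable_const]

theorem intervalIntegrable_gohBuilder_apply (hij : i ≠ j)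
    (hαi : 0 < αi) (hαj : 0 < αj) (hβi : 0 < βi) (hβj : 0 < βj) (h : Fin m) :
    IntervalIntegrable (gohBuilder i j αi αj βi βj · h) volume 0 1 := by
  simpa only [zero_add, add_halves] using intervalIntegrable_of_shift_eqOn_neg
    (intervalIntegrable_gohBuilder_apply_half hij hαi hαj hβi hβj h)
    (eqOn_gohBuilder_apply_add_half h)

theorem integral_gohBuilder_apply (hij : i ≠ j)
    (hαi : 0 < αi) (hαj : 0 < αj) (hβi : 0 < βi) (hβj : 0 < βj) (h : Fin m) :
    ∫ t in (0 : ℝ)..1, gohBuilder i j αi αj βi βj t h = 0 := by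
  simpa only [zero_add, add_halves] using integral_eq_zero_of_shift_eqOn_neg
    (intervalIntegrable_gohBuilder_apply_half hij hαi hαj hβi hβj h)
    (eqOn_gohBuilder_apply_add_half h)

theorem integral_gohPrimitive_mul_gohBuilder (hij : i ≠ j)
    (hαi : 0 < αi) (hαj : 0 < αj) (hβi : 0 < βi) (hβj : 0 < βj) (p q : Fin m) :
    ∫ t in (0 : ℝ)..1, gohPrimitive i j αi αj βi βj t p * gohBuilder i j αi αj βi βj t q =
      iteratedIntegral (gohBuilder i j αi αj βi βj · p) (gohBuilder i j αi αj βi βj · q) 0 1 := by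
  refine intervalIntegral.integral_congr fun t ht => ?_
  have hγ (h : Fin m) : IntervalIntegrable (gohBuilder i j αi αj βi βj · h) volume 0 t :=
    (intervalIntegrable_gohBuilder_apply hij hαi hαj hβi hβj h).mono_set
      (uIcc_subset_uIcc_left ht)
  simp only [gohPrimitive, intervalIntegral_apply hγ]

theorem two_mul_gohSide_mul_gohSide :
    2 * (gohSide αi αj βi βj * gohSide αi αj βi βj) = 1 / (2 * gohRate αi αj βi βj ^ 2) := by
  rw [gohSide]
  ring

theorem iteratedIntegral_gohBuilder (hij : i ≠ j)
    (hαi : 0 < αi) (hαj : 0 < αj) (hβi : 0 < βi) (hβj : 0 < βj) :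
    iteratedIntegral (gohBuilder i j αi αj βi βj · i) (gohBuilder i j αi αj βi βj · j) 0 1 =
      1 / (2 * gohRate αi αj βi βj ^ 2) := by
  have hfirst := isCornerVelocity_gohBuilder_first hij hαi hαj hβi hβj
  have hsecond := isCornerVelocity_gohBuilder_second hij hαi hαj hβi hβj
  have hdouble := iteratedIntegral_eq_two_mul_of_shift_eqOn_neg
    (intervalIntegrable_gohBuilder_apply_half hij hαi hαj hβi hβj i)
    (intervalIntegrable_gohBuilder_apply_half hij hαi hαj hβi hβj j)
    (eqOn_gohBuilder_apply_add_half i) (eqOn_gohBuilder_apply_add_half j)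
    (by rw [zero_add]; exact hfirst.integral_fst_rectangle hsecond)
  rw [zero_add, add_halves, hfirst.iteratedIntegral_rectangle hsecond] at hdouble
  exact hdouble.trans two_mul_gohSide_mul_gohSide

theorem iteratedIntegral_gohBuilder_swap (hij : i ≠ j)
    (hαi : 0 < αi) (hαj : 0 < αj) (hβi : 0 < βi) (hβj : 0 < βj) :
    iteratedIntegral (gohBuilder i j αi αj βi βj · j) (gohBuilder i j αi αj βi βj · i) 0 1 =
      -(1 / (2 * gohRate αi αj βi βj ^ 2)) := by
  have hparts := iteratedIntegral_add_swap
    (intervalIntegrable_gohBuilder_apply hij hαi hαj hβi hβj i)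
    (intervalIntegrable_gohBuilder_apply hij hαi hαj hβi hβj j)
  rw [iteratedIntegral_gohBuilder hij hαi hαj hβi hβj,
    integral_gohBuilder_apply hij hαi hαj hβi hβj i, zero_mul] at hparts
  exact eq_neg_of_add_eq_zero_right hparts

end GohBuilder

/-- **Area integrals of the Goh variation builder** (Lemma 3.5).
The integral `∫₀¹ Γⁱ (Γʲ)' dt` is the signed area encircled by the closed plane curve
`(Γⁱ, Γʲ)`, and it equals `1/(2r²)`; the components with index `h ∉ {i,j}` (including the
"time" component `h = 0`, for which `γ⁰ := 0`) give vanishing area integrals. -/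
theorem goh_builder_area_integrals
    {m : ℕ} (i j : Fin m) (hij : i < j)
    (αi αj βi βj : ℝ) (hαi : 0 < αi) (hαj : 0 < αj) (hβi : 0 < βi) (hβj : 0 < βj) :
    -- (a) the area integral in positions (i,j) and (j,i)
    (∫ t in (0:ℝ)..1, gohPrimitive i j αi αj βi βj t i * gohBuilder i j αi αj βi βj t j) =
        1 / (2 * (αi⁻¹ + αj⁻¹ + βi⁻¹ + βj⁻¹) ^ 2) ∧
    (∫ t in (0:ℝ)..1, gohPrimitive i j αi αj βi βj t j * gohBuilder i j αi αj βi βj t i) =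
        -(1 / (2 * (αi⁻¹ + αj⁻¹ + βi⁻¹ + βj⁻¹) ^ 2)) ∧
    -- (b) the components `h ∈ {1,…,m} \ {i,j}`
    (∀ h : Fin m, h ≠ i → h ≠ j →
      (∫ t in (0:ℝ)..1, gohPrimitive i j αi αj βi βj t i * gohBuilder i j αi αj βi βj t h) = 0 ∧
      (∫ t in (0:ℝ)..1, gohPrimitive i j αi αj βi βj t j * gohBuilder i j αi αj βi βj t h) = 0) ∧
    -- (b) the "time" component `h = 0`, with `γ⁰ := 0`
    (∫ t in (0:ℝ)..1, gohPrimitive i j αi αj βi βj t i * (0:ℝ)) = 0 ∧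
    (∫ t in (0:ℝ)..1, gohPrimitive i j αi αj βi βj t j * (0:ℝ)) = 0 := by
  have harea := integral_gohPrimitive_mul_gohBuilder hij.ne hαi hαj hβi hβj
  refine ⟨?_, ?_, fun h hi hj => ?_, by simp, by simp⟩
  · exact (harea i j).trans (iteratedIntegral_gohBuilder hij.ne hαi hαj hβi hβj)
  · exact (harea j i).trans (iteratedIntegral_gohBuilder_swap hij.ne hαi hαj hβi hβj)
  · simp [gohBuilder_apply_of_ne hi hj]
end

section
/- Exponential product approximation with sublinear coefficients (Lemma 4.1). Let m ∈ ℕ, χ > 0, and let b^0, …, b^m ∈ L^1([0,T]; ℝ) satisfy |b^i(s)| ≤ χ s for a.e. s ∈ [0,T]. Let X_0, …, X_m ∈ C^1(Ω; ℝ^n) be vector fields on an open set Ω ⊆ ℝ^n, and let x(·) be a solution on [0,T] of ẋ(t) = Σ_{i=0}^m b^i(t) X_i(x(t)). Setting B^i(t) := ∫_0^t b^i(s) ds, and assuming the relevant flows and compositions are defined, one has x(t) = e^{B^0(t) X_0} ∘ ⋯ ∘ e^{B^m(t) X_m}(x(0)) + o(t³) as t → 0+. -/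
open MeasureTheory Set Filter Topology

/-!
Both sides have the same first-order expansion at `p = x 0`. Since `b i s = O(s)`, one gets
`B i t = O(t²)` and `x t - p = O(t²)`, so replacing `X i (x s)` by `X i p` in the integral equation
costs `∫₀ᵗ s · O(s²) ds = O(t⁴)`. On the other side `e^{τ X} y = y + τ X p + O(|τ| (|τ| + ‖y - p‖))`
near `(0, p)`, so each factor of the composition contributes `B i t • X i p` up to `O(t⁴)`.
-/

open Asymptotics Metric

variable {E : Type*} [NormedAddCommGroup E] [NormedSpace ℝ E]

section Flow

variable {X : E → E} {Φ : ℝ → E → E} {p : E}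

/-- `Φ τ y` is the flow `e^{τ X} y` of the vector field `X`, for `(τ, y)` in a neighbourhood of
`(0, p)`; nothing is required of `X` or `Φ` outside it. -/
structure IsLocalFlowAt (X : E → E) (Φ : ℝ → E → E) (p : E) : Prop where
  map_zero : ∀ᶠ y in 𝓝 p, Φ 0 y = y
  hasDerivAt : ∀ᶠ z : ℝ × E in 𝓝 (0, p), HasDerivAt (Φ · z.2) (X (Φ z.1 z.2)) z.1

theorem norm_sub_le_of_isIntegralCurveOn {V : E → E} {c : ℝ → E} {K R : ℝ}
    (hc : IsIntegralCurveOn c (fun _ ↦ V) (Icc 0 1)) (hR : 0 ≤ R) (hKR : K < R)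
    (hV : ∀ y ∈ closedBall (c 0) R, ‖V y‖ ≤ K) {s : ℝ} (hs : s ∈ Icc 0 1) :
    ‖c s - c 0‖ ≤ K := by
  have hK : 0 ≤ K := (norm_nonneg _).trans (hV _ (mem_closedBall_self hR))
  have mem_ball {u : ℝ} (hu : u ∈ Icc 0 1) (h : ‖c u - c 0‖ ≤ R * u) : c u ∈ closedBall (c 0) R :=
    mem_closedBall_iff_norm.2 (h.trans (mul_le_of_le_one_right hR hu.2))
  have trapped {u : ℝ} (hu : u ∈ Icc 0 1) : ‖c u - c 0‖ ≤ R * u :=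
    image_norm_le_of_norm_deriv_right_lt_deriv_boundary (f := fun u ↦ c u - c 0)
      (f' := fun u ↦ V (c u)) (B := fun u ↦ R * u) (B' := fun _ ↦ R)
      (fun u hu ↦ (hc u hu).continuousWithinAt.sub continuousWithinAt_const)
      (fun u hu ↦ ((hc u (Ico_subset_Icc_self hu)).mono_of_mem_nhdsWithin
        (Icc_mem_nhdsGE_of_mem hu)).sub_const _)
      (by simp) (fun u ↦ by simpa using (hasDerivAt_id u).const_mul R)
      (fun u hu h ↦ (hV _ (mem_ball (Ico_subset_Icc_self hu) h.le)).trans_lt hKR) hu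
  calc ‖c s - c 0‖ ≤ K * (s - 0) :=
        norm_image_sub_le_of_norm_deriv_le_segment' hc
          (fun u hu ↦ hV _ (mem_ball (Ico_subset_Icc_self hu) (trapped (Ico_subset_Icc_self hu))))
          s hs
    _ ≤ K := by rw [sub_zero]; exact mul_le_of_le_one_right hK hs.2

theorem norm_sub_sub_smul_le_of_isIntegralCurveOn {c : ℝ → E} {L r τ : ℝ} (hL : 0 ≤ L)
    (hX : ∀ y ∈ closedBall p r, ‖X y - X p‖ ≤ L * ‖y - p‖)
    (hc : IsIntegralCurveOn c (fun _ ↦ τ • X) (Icc 0 1)) (hc0 : c 0 ∈ closedBall p (r / 2))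
    (hτ : |τ| * (‖X p‖ + L * r) < r / 2) :
    ‖c 1 - c 0 - τ • X p‖ ≤ |τ| * (L * (|τ| * (‖X p‖ + L * r) + ‖c 0 - p‖)) := by
  have hr : 0 ≤ r / 2 := dist_nonneg.trans hc0
  have ball_subset : closedBall (c 0) (r / 2) ⊆ closedBall p r :=
    closedBall_subset_closedBall' (by linarith [mem_closedBall.1 hc0])
  have norm_X_le (y : E) (hy : y ∈ closedBall p r) : ‖X y‖ ≤ ‖X p‖ + L * r :=
    calc ‖X y‖ ≤ ‖X p‖ + ‖X y - X p‖ := norm_le_norm_add_norm_sub' _ _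
      _ ≤ ‖X p‖ + L * r := by
        gcongr
        exact (hX y hy).trans (by gcongr; exact mem_closedBall_iff_norm.1 hy)
  have near {s : ℝ} (hs : s ∈ Icc 0 1) : ‖c s - c 0‖ ≤ |τ| * (‖X p‖ + L * r) :=
    norm_sub_le_of_isIntegralCurveOn hc hr hτ (fun y hy ↦ by
      rw [Pi.smul_apply, norm_smul, Real.norm_eq_abs]
      gcongr
      exact norm_X_le y (ball_subset hy)) hs
  have deriv_le (s : ℝ) (hs : s ∈ Icc 0 1) :
      ‖τ • X (c s) - τ • X p‖ ≤ |τ| * (L * (|τ| * (‖X p‖ + L * r) + ‖c 0 - p‖)) := by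
    rw [← smul_sub, norm_smul, Real.norm_eq_abs]
    gcongr
    have hcs : c s ∈ closedBall (c 0) (r / 2) := mem_closedBall_iff_norm.2 ((near hs).trans hτ.le)
    refine (hX _ (ball_subset hcs)).trans ?_
    gcongr
    exact (norm_sub_le_norm_sub_add_norm_sub _ (c 0) _).trans (by gcongr; exact near hs)
  have mean_value := norm_image_sub_le_of_norm_deriv_le_segment_01'
    (f := fun s ↦ c s - s • τ • X p) (f' := fun s ↦ τ • X (c s) - τ • X p)
    (fun s hs ↦ (hc s hs).sub (by
      simpa using ((hasDerivAt_id s).smul_const (τ • X p)).hasDerivWithinAt))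
    (fun s hs ↦ deriv_le s (Ico_subset_Icc_self hs))
  simpa [sub_right_comm] using mean_value

namespace IsLocalFlowAt

theorem of_forall (hΦ0 : ∀ y, Φ 0 y = y)
    (hΦ : ∀ y τ, HasDerivAt (fun τ' ↦ Φ τ' y) (X (Φ τ y)) τ) : IsLocalFlowAt X Φ p :=
  ⟨.of_forall hΦ0, .of_forall fun z ↦ hΦ z.2 z.1⟩

-- Rescaling time to `[0, 1]` treats both signs of `τ` at once.
theorem eventually_isIntegralCurveOn (hΦ : IsLocalFlowAt X Φ p) :
    ∀ᶠ z : ℝ × E in 𝓝 (0, p),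
      IsIntegralCurveOn (fun s ↦ Φ (s * z.1) z.2) (fun _ ↦ z.1 • X) (Icc 0 1) := by
  obtain ⟨ε, hε, hball⟩ := Metric.eventually_nhds_iff.1 hΦ.hasDerivAt
  refine Metric.eventually_nhds_iff.2 ⟨ε, hε, fun z hz s hs ↦ ?_⟩
  have dist_le : dist (s * z.1, z.2) (0, p) ≤ dist z (0, p) := by
    simp only [Prod.dist_eq, Real.dist_eq, sub_zero, abs_mul, abs_of_nonneg hs.1]
    exact max_le_max_right _ (mul_le_of_le_one_left (abs_nonneg _) hs.2)
  have := (hball (dist_le.trans_lt hz)).scomp s (hasDerivAt_mul_const z.1)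
  exact this.hasDerivWithinAt

theorem isBigO_sub_sub_smul (hΦ : IsLocalFlowAt X Φ p)
    (hX : (fun y ↦ X y - X p) =O[𝓝 p] fun y ↦ y - p) :
    (fun z : ℝ × E ↦ Φ z.1 z.2 - z.2 - z.1 • X p) =O[𝓝 (0, p)]
      fun z ↦ z.1 * ‖z - (0, p)‖ := by
  obtain ⟨L, hL, hXL⟩ := hX.exists_nonneg
  obtain ⟨r, hr, hball⟩ := nhds_basis_closedBall.eventually_iff.1 hXL.bound
  set K := ‖X p‖ + L * r
  have hK : 0 ≤ K := by positivity
  have time_small : ∀ᶠ z : ℝ × E in 𝓝 (0, p), |z.1| * K < r / 2 :=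
    ContinuousAt.eventually_lt (by fun_prop) continuousAt_const (by simpa using hr)
  have start_near : ∀ᶠ z : ℝ × E in 𝓝 (0, p), z.2 ∈ closedBall p (r / 2) :=
    continuousAt_snd.eventually_mem (closedBall_mem_nhds p (half_pos hr))
  refine .of_bound (L * (K + 1)) ?_
  filter_upwards [hΦ.eventually_isIntegralCurveOn, continuousAt_snd.eventually hΦ.map_zero,
    time_small, start_near] with z hcurve hzero hτ hstart
  have h := norm_sub_sub_smul_le_of_isIntegralCurveOn hL (fun y hy ↦ hball hy) hcurve
    (by simpa [hzero] using hstart) hτ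
  simp only [one_mul, zero_mul, hzero] at h
  calc ‖Φ z.1 z.2 - z.2 - z.1 • X p‖ ≤ |z.1| * (L * (|z.1| * K + ‖z.2 - p‖)) := h
    _ ≤ |z.1| * (L * (‖z - (0, p)‖ * K + ‖z - (0, p)‖)) := by
      gcongr <;> simp [Prod.norm_def]
    _ = L * (K + 1) * ‖z.1 * ‖z - (0, p)‖‖ := by
      rw [norm_mul, norm_norm, Real.norm_eq_abs]
      ring

variable {α : Type*} {l : Filter α} {g : α → ℝ}

theorem isBigO_comp_sub_sub_smul (hΦ : IsLocalFlowAt X Φ p)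
    (hX : (fun y ↦ X y - X p) =O[𝓝 p] fun y ↦ y - p) (hg : Tendsto g l (𝓝 0))
    {β : α → ℝ} {u : α → E} (hβ : β =O[l] g) (hu : (fun t ↦ u t - p) =O[l] g) :
    (fun t ↦ Φ (β t) (u t) - u t - β t • X p) =O[l] fun t ↦ g t ^ 2 := by
  have hlim : Tendsto (fun t ↦ (β t, u t)) l (𝓝 (0, p)) :=
    (hβ.trans_tendsto hg).prodMk_nhds (tendsto_sub_nhds_zero_iff.1 (hu.trans_tendsto hg))
  have hdist : (fun t ↦ ‖(β t, u t) - (0, p)‖) =O[l] g := by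
    simpa only [Prod.mk_sub_mk, sub_zero] using (hβ.prod_left hu).norm_left
  simpa only [Function.comp_def, sq] using
    ((hΦ.isBigO_sub_sub_smul hX).comp_tendsto hlim).trans (hβ.mul hdist)

theorem isBigO_foldr_comp_sub_sub_sum {ι : Type*} {X : ι → E → E} {Φ : ι → ℝ → E → E}
    (hΦ : ∀ i, IsLocalFlowAt (X i) (Φ i) p)
    (hX : ∀ i, (fun y ↦ X i y - X i p) =O[𝓝 p] fun y ↦ y - p) (hg : Tendsto g l (𝓝 0))
    {β : ι → α → ℝ} (hβ : ∀ i, β i =O[l] g) (is : List ι) :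
    (fun t ↦ (is.map fun i ↦ Φ i (β i t)).foldr (· ∘ ·) id p - p
      - (is.map fun i ↦ β i t • X i p).sum) =O[l] fun t ↦ g t ^ 2 := by
  have sq_isBigO : (fun t ↦ g t ^ 2) =O[l] g := by
    simpa [sq] using (hg.isBigO_one ℝ).mul (isBigO_refl g l)
  have smul_isBigO (i : ι) : (fun t ↦ β i t • X i p) =O[l] g := by
    simpa using (hβ i).smul (isBigO_const_const (X i p) (one_ne_zero (α := ℝ)) l)
  have sum_isBigO (is : List ι) : (fun t ↦ (is.map fun i ↦ β i t • X i p).sum) =O[l] g := by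
    induction is with
    | nil => simpa using isBigO_zero g l
    | cons i is ih => simpa using (smul_isBigO i).add ih
  induction is with
  | nil => simpa using isBigO_zero (fun t ↦ g t ^ 2) l
  | cons i is ih =>
    have tail_isBigO : (fun t ↦ (is.map fun i ↦ Φ i (β i t)).foldr (· ∘ ·) id p - p) =O[l] g := by
      simpa using (ih.trans sq_isBigO).add (sum_isBigO is)
    refine (((hΦ i).isBigO_comp_sub_sub_smul (hX i) hg (hβ i) tail_isBigO).add ih).congr_left
      fun t ↦ ?_
    simp only [List.map_cons, List.foldr_cons, List.sum_cons, Function.comp_apply]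
    abel

end IsLocalFlowAt

end Flow

section Trajectory

theorem eventually_nhdsGT_inf_ae_iff {a : ℝ} {P : ℝ → Prop} :
    (∀ᶠ s in 𝓝[>] a ⊓ ae volume, P s) ↔ ∃ δ > a, ∀ᵐ s, s ∈ Ioc a δ → P s := by
  constructor
  · intro h
    obtain ⟨U, hU, V, hV, hUV⟩ := mem_inf_iff_superset.1 h
    obtain ⟨δ, hδ, hδU⟩ := mem_nhdsGT_iff_exists_Ioc_subset.1 hU
    exact ⟨δ, hδ, mem_of_superset hV fun s hs hsδ ↦ hUV ⟨hδU hsδ, hs⟩⟩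
  · rintro ⟨δ, hδ, h⟩
    exact mem_inf_iff_superset.2 ⟨_, Ioc_mem_nhdsGT hδ, _, h, fun s hs ↦ hs.2 hs.1⟩

theorem isBigO_nhdsGT_inf_ae_of_abs_le {b : ℝ → ℝ} {T χ : ℝ} (hT : 0 < T)
    (hb : ∀ᵐ s ∂volume.restrict (Icc 0 T), |b s| ≤ χ * s) :
    b =O[𝓝[>] 0 ⊓ ae volume] fun s ↦ s := by
  refine .of_bound χ (eventually_nhdsGT_inf_ae_iff.2 ⟨T, hT, ?_⟩)
  filter_upwards [(ae_restrict_iff' measurableSet_Icc).1 hb] with s hs hsT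
  simpa [abs_of_pos hsT.1] using hs (Ioc_subset_Icc_self hsT)

theorem isBigO_intervalIntegral_pow {f : ℝ → E} {k : ℕ}
    (hf : f =O[𝓝[>] 0 ⊓ ae volume] fun s ↦ s ^ k) :
    (fun t ↦ ∫ s in (0 : ℝ)..t, f s) =O[𝓝[>] 0] fun t ↦ t ^ (k + 1) := by
  obtain ⟨C, hC, hfC⟩ := hf.exists_nonneg
  obtain ⟨δ, hδ, hbound⟩ := eventually_nhdsGT_inf_ae_iff.1 hfC.bound
  refine .of_bound C ?_
  filter_upwards [Ioc_mem_nhdsGT hδ] with t ht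
  have hft : ∀ᵐ s, s ∈ uIoc 0 t → ‖f s‖ ≤ C * t ^ k := by
    filter_upwards [hbound] with s hs hst
    rw [uIoc_of_le ht.1.le] at hst
    refine (hs ⟨hst.1, hst.2.trans ht.2⟩).trans ?_
    rw [norm_pow, Real.norm_of_nonneg hst.1.le]
    gcongr
    exacts [hst.1.le, hst.2]
  calc ‖∫ s in (0 : ℝ)..t, f s‖ ≤ C * t ^ k * |t - 0| :=
        intervalIntegral.norm_integral_le_of_norm_le_const_ae hft
    _ = C * ‖t ^ (k + 1)‖ := by
      rw [sub_zero, norm_pow, Real.norm_eq_abs, abs_of_pos ht.1]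
      ring

theorem eventually_intervalIntegrable_nhdsGT {F : Type*} [NormedAddCommGroup F] {f : ℝ → F}
    {a b : ℝ} (hab : a < b) (hf : IntervalIntegrable f volume a b) :
    ∀ᶠ t in 𝓝[>] a, IntervalIntegrable f volume a t := by
  filter_upwards [Ioc_mem_nhdsGT hab] with t ht
  exact hf.mono_set (uIcc_subset_uIcc_left (Icc_subset_uIcc (Ioc_subset_Icc_self ht)))

theorem tendsto_intervalIntegral_nhdsGT {f : ℝ → E} {a b : ℝ} (hab : a < b)
    (hf : IntervalIntegrable f volume a b) :
    Tendsto (fun t ↦ ∫ s in a..t, f s) (𝓝[>] a) (𝓝 0) := by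
  have hcont : ContinuousWithinAt (fun t ↦ ∫ s in a..t, f s) (Icc a b) a :=
    intervalIntegral.continuousWithinAt_primitive (by simp) (by simpa [hab.le] using hf)
  have hle : 𝓝[>] a ≤ 𝓝[Icc a b] a :=
    nhdsWithin_le_of_mem (mem_of_superset (Ioc_mem_nhdsGT hab) Ioc_subset_Icc_self)
  simpa using hcont.tendsto.mono_left hle

-- The Bochner integral of a non-integrable function is `0`, so a solution of the integral equation
-- whose right-hand side were never integrable would be constant, which makes it integrable.
theorem exists_intervalIntegrable_of_eq_add_integral {f : ℝ → E → E} {x : ℝ → E}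
    (hf : ∀ᶠ t in 𝓝[>] 0, IntervalIntegrable (f · (x 0)) volume 0 t)
    (hx : ∀ᶠ t in 𝓝[>] 0, x t = x 0 + ∫ s in (0 : ℝ)..t, f s (x s)) :
    ∃ δ > 0, IntervalIntegrable (fun s ↦ f s (x s)) volume 0 δ := by
  by_contra! h
  have hconst : ∀ᶠ t in 𝓝[>] 0, x t = x 0 := by
    filter_upwards [hx, self_mem_nhdsWithin] with t ht ht0
    rw [ht, intervalIntegral.integral_undef (h t ht0), add_zero]
  obtain ⟨ε, hε, hconst⟩ := mem_nhdsGT_iff_exists_Ioc_subset.1 hconst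
  obtain ⟨t, hft, ht⟩ := (hf.and (Ioc_mem_nhdsGT hε)).exists
  refine h t ht.1 (hft.congr fun s hs ↦ ?_)
  rw [uIoc_of_le ht.1.le] at hs
  exact congrArg (f s) (hconst ⟨hs.1, hs.2.trans ht.2⟩).symm

variable {ι : Type*} [Fintype ι] {X : ι → E → E} {b : ι → ℝ → ℝ} {x : ℝ → E} {k : ℕ}

theorem isBigO_sub_of_eq_add_integral (hX : ∀ i, ContinuousAt (X i) (x 0))
    (hb : ∀ i, b i =O[𝓝[>] 0 ⊓ ae volume] fun s ↦ s ^ k) (hxlim : Tendsto x (𝓝[>] 0) (𝓝 (x 0)))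
    (hx : ∀ᶠ t in 𝓝[>] 0, x t = x 0 + ∫ s in (0 : ℝ)..t, ∑ i, b i s • X i (x s)) :
    (fun t ↦ x t - x 0) =O[𝓝[>] 0] fun t ↦ t ^ (k + 1) := by
  have velocity_isBigO :
      (fun s ↦ ∑ i, b i s • X i (x s)) =O[𝓝[>] 0 ⊓ ae volume] fun s ↦ s ^ k :=
    IsBigO.fun_sum fun i _ ↦ by
      simpa using (hb i).smul ((((hX i).tendsto.comp hxlim).isBigO_one ℝ).mono inf_le_left)
  refine (isBigO_intervalIntegral_pow velocity_isBigO).congr' ?_ .rfl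
  filter_upwards [hx] with t ht
  rw [ht, add_sub_cancel_left]

theorem isBigO_sub_sub_sum_of_eq_add_integral [CompleteSpace E]
    (hX : ∀ i, (fun y ↦ X i y - X i (x 0)) =O[𝓝 (x 0)] fun y ↦ y - x 0)
    (hbI : ∀ i, ∀ᶠ t in 𝓝[>] 0, IntervalIntegrable (b i) volume 0 t)
    (hb : ∀ i, b i =O[𝓝[>] 0 ⊓ ae volume] fun s ↦ s ^ k)
    (hx : ∀ᶠ t in 𝓝[>] 0, x t = x 0 + ∫ s in (0 : ℝ)..t, ∑ i, b i s • X i (x s)) :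
    (fun t ↦ x t - x 0 - ∑ i, (∫ s in (0 : ℝ)..t, b i s) • X i (x 0)) =O[𝓝[>] 0]
      fun t ↦ (t ^ (k + 1)) ^ 2 := by
  have const_integrable : ∀ᶠ t in 𝓝[>] 0, ∀ i,
      IntervalIntegrable (fun s ↦ b i s • X i (x 0)) volume 0 t :=
    eventually_all.2 fun i ↦ (hbI i).mono fun t ht ↦ ⟨ht.1.smul_const _, ht.2.smul_const _⟩
  have const_sum_integrable : ∀ᶠ t in 𝓝[>] 0,
      IntervalIntegrable (fun s ↦ ∑ i, b i s • X i (x 0)) volume 0 t :=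
    const_integrable.mono fun t ht ↦ by
      simpa only [Finset.sum_fn] using IntervalIntegrable.sum Finset.univ fun i _ ↦ ht i
  obtain ⟨δ, hδ, hF⟩ := exists_intervalIntegrable_of_eq_add_integral
    (f := fun s y ↦ ∑ i, b i s • X i y) const_sum_integrable hx
  have hxlim : Tendsto x (𝓝[>] 0) (𝓝 (x 0)) := by
    have := (tendsto_intervalIntegral_nhdsGT hδ hF).const_add (x 0)
    rw [add_zero] at this
    exact this.congr' (hx.mono fun t ht ↦ ht.symm)
  have hXcont (i : ι) : ContinuousAt (X i) (x 0) :=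
    tendsto_sub_nhds_zero_iff.1 ((hX i).trans_tendsto (tendsto_sub_nhds_zero_iff.2 tendsto_id))
  have hx_sub := isBigO_sub_of_eq_add_integral hXcont hb hxlim hx
  have integrand_isBigO : (fun s ↦ ∑ i, b i s • (X i (x s) - X i (x 0)))
      =O[𝓝[>] 0 ⊓ ae volume] fun s ↦ s ^ (k + (k + 1)) :=
    IsBigO.fun_sum fun i _ ↦ by
      simpa only [pow_add _ k (k + 1), smul_eq_mul, Function.comp_def] using
        (hb i).smul ((((hX i).comp_tendsto hxlim).trans hx_sub).mono inf_le_left)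
  refine (isBigO_intervalIntegral_pow integrand_isBigO).congr' ?_ (.of_forall fun t ↦ by ring)
  filter_upwards [hx, eventually_intervalIntegrable_nhdsGT hδ hF, const_integrable,
    const_sum_integrable] with t hxt hFt hconst hconst_sum
  simp only [smul_sub, Finset.sum_sub_distrib]
  rw [intervalIntegral.integral_sub hFt hconst_sum,
    intervalIntegral.integral_finsetSum fun i _ ↦ hconst i, hxt, add_sub_cancel_left]
  simp only [intervalIntegral.integral_smul_const]

end Trajectory

theorem exp_product_sublinear_general [CompleteSpace E] {m k : ℕ} {X : Fin m → E → E}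
    {b : Fin m → ℝ → ℝ} {x : ℝ → E} {Φ : Fin m → ℝ → E → E}
    (hX : ∀ i, (fun y ↦ X i y - X i (x 0)) =O[𝓝 (x 0)] fun y ↦ y - x 0)
    (hbI : ∀ i, ∀ᶠ t in 𝓝[>] 0, IntervalIntegrable (b i) volume 0 t)
    (hb : ∀ i, b i =O[𝓝[>] 0 ⊓ ae volume] fun s ↦ s ^ k)
    (hx : ∀ᶠ t in 𝓝[>] 0, x t = x 0 + ∫ s in (0 : ℝ)..t, ∑ i, b i s • X i (x s))
    (hΦ : ∀ i, IsLocalFlowAt (X i) (Φ i) (x 0)) :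
    (fun t : ℝ ↦ x t -
        ((List.ofFn fun i : Fin m ↦ Φ i (∫ s in (0 : ℝ)..t, b i s)).foldr (· ∘ ·) id) (x 0))
      =O[𝓝[>] 0] fun t ↦ (t ^ (k + 1)) ^ 2 := by
  have pow_tendsto : Tendsto (fun t : ℝ ↦ t ^ (k + 1)) (𝓝[>] 0) (𝓝 0) :=
    ((continuous_pow (k + 1)).tendsto' 0 0 (by simp)).mono_left nhdsWithin_le_nhds
  have trajectory := isBigO_sub_sub_sum_of_eq_add_integral hX hbI hb hx
  have product := IsLocalFlowAt.isBigO_foldr_comp_sub_sub_sum hΦ hX pow_tendsto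
    (fun i ↦ isBigO_intervalIntegral_pow (hb i)) (List.finRange m)
  refine (trajectory.sub product).congr_left fun t ↦ ?_
  simp only [← List.ofFn_eq_map, List.sum_ofFn]
  abel

/-- **Exponential product approximation with sublinear coefficients** (Lemma 4.1).
The flows `e^{τ Xᵢ}` are encoded by maps `Φ i` satisfying the flow ODE; the composition
`e^{B⁰(t)X₀} ∘ ⋯ ∘ e^{Bᵐ(t)Xₘ}` is the fold of the list of flow maps. -/
theorem exp_product_sublinear
    {n M : ℕ} {T : ℝ} (hT : 0 < T) (χ : ℝ) (hχ : 0 < χ)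
    (Ω : Set (Fin n → ℝ)) (hΩ : IsOpen Ω)
    (X : Fin (M + 1) → (Fin n → ℝ) → Fin n → ℝ)
    (hX : ∀ i, ContDiffOn ℝ 1 (X i) Ω)
    (b : Fin (M + 1) → ℝ → ℝ)
    (hbI : ∀ i, IntervalIntegrable (b i) volume 0 T)
    (hb : ∀ i, ∀ᵐ s ∂(volume.restrict (Set.Icc (0:ℝ) T)), |b i s| ≤ χ * s)
    (x : ℝ → Fin n → ℝ)
    (hx : ∀ t ∈ Set.Icc (0:ℝ) T, x t = x 0 + ∫ s in (0:ℝ)..t, ∑ i, b i s • X i (x s))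
    (hxΩ : ∀ t ∈ Set.Icc (0:ℝ) T, x t ∈ Ω)
    -- the flows `Φ i τ = e^{τ Xᵢ}`, assumed to be (globally) defined
    (Φ : Fin (M + 1) → ℝ → (Fin n → ℝ) → Fin n → ℝ)
    (hΦ0 : ∀ i y, Φ i 0 y = y)
    (hΦ : ∀ i y τ, HasDerivAt (fun τ' => Φ i τ' y) (X i (Φ i τ y)) τ) :
    (fun t : ℝ => x t -
        ((List.ofFn fun i : Fin (M + 1) => Φ i (∫ s in (0:ℝ)..t, b i s)).foldr
          (· ∘ ·) id) (x 0))
      =o[nhdsWithin 0 (Set.Ioi 0)] (fun t => t ^ 3) := by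
  have hX_diff (i) : DifferentiableAt ℝ (X i) (x 0) :=
    ((hX i).contDiffAt (hΩ.mem_nhds (hxΩ 0 (left_mem_Icc.2 hT.le)))).differentiableAt one_ne_zero
  have pow_four_isLittleO : (fun t : ℝ ↦ (t ^ 2) ^ 2) =o[𝓝[>] 0] fun t ↦ t ^ 3 := by
    simpa only [← pow_mul] using
      (isLittleO_pow_pow (𝕜 := ℝ) (by norm_num : 3 < 2 * 2)).mono nhdsWithin_le_nhds
  exact (exp_product_sublinear_general (k := 1) (fun i ↦ (hX_diff i).isBigO_sub)
    (fun i ↦ eventually_intervalIntegrable_nhdsGT hT (hbI i))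
    (fun i ↦ by simpa only [pow_one] using isBigO_nhdsGT_inf_ae_of_abs_le hT (hb i))
    (mem_of_superset (Ioc_mem_nhdsGT hT) fun t ht ↦ hx t (Ioc_subset_Icc_self ht))
    (fun i ↦ .of_forall (hΦ0 i) (hΦ i))).trans_isLittleO pow_four_isLittleO
end
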